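/- arXiv:1303.5835 — 2 statements merged into one kernel-verified Lean document; each statement's English description precedes it below -/
import Mathlib

section
/- Let μ be a Borel probability measure on ℝ^d admitting a density p with respect to Lebesgue measure that is strictly positive and continuously differentiable on all of ℝ^d, with p and its first-order partial derivatives of exponential decay at infinity. Then there exists a continuously differentiable bijection U from (0,1)^d onto ℝ^d (a C¹ diffeomorphism) such that: (i) the pushforward of the uniform probability measure on (0,1)^d under U equals μ (equivalently, if η₁,…,η_d are independent uniform random variables on (0,1), then U(η₁,…,η_d) has law μ); (ii) the Jacobian matrix of U is triangular: ∂U_i/∂z_j(z) = 0 whenever j > i, so that U_i depends only on (z₁,…,z_i); and (iii) the diagonal entries never vanish: ∂U_i/∂z_i(z) ≠ 0 for all z ∈ (0,1)^d and all i. -/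
open MeasureTheory
open scoped ENNReal NNReal

noncomputable section

/-- The open unit cube `(0,1)^d` in `ℝ^d`. -/
def unitCube (d : ℕ) : Set (Fin d → ℝ) := Set.univ.pi fun _ => Set.Ioo (0 : ℝ) 1

/-- two-sided exponential is integrable -/
lemma kr_integrable_exp {ε : ℝ} (hε : 0 < ε) : Integrable (fun t : ℝ => Real.exp (-ε * |t|)) := by
  rw [← integrableOn_univ, ← Set.Iic_union_Ioi (a := (0:ℝ))]
  refine IntegrableOn.union ?_ ?_
  · refine (integrableOn_exp_mul_Iic hε 0).congr_fun (fun t ht => ?_) measurableSet_Iic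
    simp only [abs_of_nonpos (Set.mem_Iic.1 ht)]; ring_nf
  · refine (exp_neg_integrableOn_Ioi 0 hε).congr_fun (fun t ht => ?_) measurableSet_Ioi
    simp only [abs_of_pos (Set.mem_Ioi.1 ht)]

set_option linter.unusedSectionVars false

section par
variable {E F : Type*} [NormedAddCommGroup E] [NormedSpace ℝ E]
  [NormedAddCommGroup F] [NormedSpace ℝ F]

lemma kr_bound {c ε : ℝ} (hc : 0 < c) (hε : 0 < ε) {e : E} (he : ‖e‖ = 1) (y₀ y : E)
    (hy : y ∈ Metric.ball y₀ 1) (t : ℝ) :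
    c * Real.exp (-ε * ‖y + t • e‖) ≤ (c * Real.exp (ε * (‖y₀‖ + 1))) * Real.exp (-ε * |t|) := by
  rw [mul_assoc, ← Real.exp_add]
  gcongr
  have h1 : |t| ≤ ‖y + t • e‖ + ‖y‖ := by
    have : t • e = (y + t • e) - y := by abel
    calc |t| = ‖t • e‖ := by rw [norm_smul, he, mul_one, Real.norm_eq_abs]
      _ = ‖(y + t • e) - y‖ := by rw [← this]
      _ ≤ _ := norm_sub_le _ _
  have h2 : ‖y‖ ≤ ‖y₀‖ + 1 := by
    have := norm_sub_norm_le y y₀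
    rw [mem_ball_iff_norm] at hy
    linarith
  nlinarith

lemma kr_line_integrable {c ε : ℝ} (hc : 0 < c) (hε : 0 < ε) {e : E} (he : ‖e‖ = 1)
    {f : E → F} (hf : Continuous f) (hb : ∀ x, ‖f x‖ ≤ c * Real.exp (-ε * ‖x‖)) (y : E) :
    Integrable (fun t : ℝ => f (y + t • e)) := by
  refine ((kr_integrable_exp hε).const_mul (c * Real.exp (ε * (‖y‖ + 1)))).mono' ?_ ?_
  · have : Continuous (fun t : ℝ => f (y + t • e)) := by fun_prop
    exact this.aestronglyMeasurable
  · exact Filter.Eventually.of_forall fun t => (hb _).trans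
      (kr_bound hc hε he y y (Metric.mem_ball_self one_pos) t)

lemma kr_line_continuous {c ε : ℝ} (hc : 0 < c) (hε : 0 < ε) {e : E} (he : ‖e‖ = 1)
    {f : E → F} (hf : Continuous f) (hb : ∀ x, ‖f x‖ ≤ c * Real.exp (-ε * ‖x‖)) (S : Set ℝ) :
    Continuous (fun y => ∫ t in S, f (y + t • e)) := by
  refine continuous_iff_continuousAt.2 fun y₀ => ?_
  refine continuousAt_of_dominated
    (bound := fun t => (c * Real.exp (ε * (‖y₀‖ + 1))) * Real.exp (-ε * |t|)) ?_ ?_ ?_ ?_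
  · exact Filter.Eventually.of_forall fun y =>
      (kr_line_integrable hc hε he hf hb y).integrableOn.aestronglyMeasurable
  · filter_upwards [Metric.ball_mem_nhds y₀ one_pos] with y hy
    exact Filter.Eventually.of_forall fun t => (hb _).trans (kr_bound hc hε he y₀ y hy t)
  · exact ((kr_integrable_exp hε).const_mul _).integrableOn
  · exact Filter.Eventually.of_forall fun t => by fun_prop

lemma kr_line_hasFDerivAt {c ε : ℝ} (hc : 0 < c) (hε : 0 < ε) {e : E} (he : ‖e‖ = 1)
    {f : E → ℝ} (hf : ContDiff ℝ 1 f) (hb : ∀ x, ‖f x‖ ≤ c * Real.exp (-ε * ‖x‖))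
    (hb' : ∀ x, ‖fderiv ℝ f x‖ ≤ c * Real.exp (-ε * ‖x‖)) (S : Set ℝ) (y₀ : E) :
    HasFDerivAt (fun y => ∫ t in S, f (y + t • e)) (∫ t in S, fderiv ℝ f (y₀ + t • e)) y₀ := by
  refine hasFDerivAt_integral_of_dominated_of_fderiv_le (F := fun y t => f (y + t • e))
    (F' := fun y t => fderiv ℝ f (y + t • e))
    (bound := fun t => (c * Real.exp (ε * (‖y₀‖ + 1))) * Real.exp (-ε * |t|))
    (Metric.ball_mem_nhds y₀ one_pos) ?_ ?_ ?_ ?_ ?_ ?_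
  · exact Filter.Eventually.of_forall fun y =>
      (kr_line_integrable hc hε he hf.continuous hb y).integrableOn.aestronglyMeasurable
  · exact (kr_line_integrable hc hε he hf.continuous hb y₀).integrableOn
  · exact (kr_line_integrable hc hε he
      (hf.continuous_fderiv one_ne_zero) hb' y₀).integrableOn.aestronglyMeasurable
  · exact Filter.Eventually.of_forall fun t y hy => (hb' _).trans (kr_bound hc hε he y₀ y hy t)
  · exact ((kr_integrable_exp hε).const_mul _).integrableOn
  · refine Filter.Eventually.of_forall fun t y hy => ?_
    have h := ((hf.differentiable one_ne_zero) (y + t • e)).hasFDerivAt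
    exact (hasFDerivAt_comp_add_right (t • e)).2 h

lemma kr_line_contDiff {c ε : ℝ} (hc : 0 < c) (hε : 0 < ε) {e : E} (he : ‖e‖ = 1)
    {f : E → ℝ} (hf : ContDiff ℝ 1 f) (hb : ∀ x, ‖f x‖ ≤ c * Real.exp (-ε * ‖x‖))
    (hb' : ∀ x, ‖fderiv ℝ f x‖ ≤ c * Real.exp (-ε * ‖x‖)) (S : Set ℝ) :
    ContDiff ℝ 1 (fun y => ∫ t in S, f (y + t • e)) :=
  contDiff_one_iff_hasFDerivAt.2 ⟨fun y => ∫ t in S, fderiv ℝ f (y + t • e),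
    kr_line_continuous hc hε he (hf.continuous_fderiv one_ne_zero) hb' S,
    fun y => kr_line_hasFDerivAt hc hε he hf hb hb' S y⟩

end par

section oned
variable {f : ℝ → ℝ}

lemma kr_cdf_hasDerivAt (hf : Continuous f) (hi : Integrable f) (s : ℝ) :
    HasDerivAt (fun s => ∫ t in Set.Iic s, f t) (f s) s := by
  have h : (fun s => ∫ t in Set.Iic s, f t) = fun s => (∫ t in Set.Iic 0, f t) + ∫ t in (0:ℝ)..s, f t := by
    ext s
    rw [← intervalIntegral.integral_Iic_sub_Iic hi.integrableOn hi.integrableOn]; ring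
  rw [h]
  exact (intervalIntegral.integral_hasDerivAt_right (hf.intervalIntegrable _ _)
    (hf.stronglyMeasurableAtFilter _ _) hf.continuousAt).const_add _

lemma kr_cdf_strictMono (hf : Continuous f) (hi : Integrable f) (hp : ∀ t, 0 < f t) :
    StrictMono (fun s => ∫ t in Set.Iic s, f t) :=
  strictMono_of_hasDerivAt_pos (kr_cdf_hasDerivAt hf hi) hp

lemma kr_cdf_top (hi : Integrable f) :
    Filter.Tendsto (fun s => ∫ t in Set.Iic s, f t) Filter.atTop (nhds (∫ t, f t)) :=
  (aecover_Iic Filter.tendsto_id).integral_tendsto_of_countably_generated hi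

lemma kr_cdf_bot (hi : Integrable f) :
    Filter.Tendsto (fun s => ∫ t in Set.Iic s, f t) Filter.atBot (nhds 0) := by
  have h : (fun s => ∫ t in Set.Iic s, f t) = fun s => (∫ t, f t) - ∫ t in Set.Ioi s, f t := by
    ext s
    rw [← intervalIntegral.integral_Iic_add_Ioi (b := s) hi.integrableOn hi.integrableOn]; ring
  rw [h]
  have := (aecover_Ioi (μ := (volume : Measure ℝ)) (l := Filter.atBot) Filter.tendsto_id).integral_tendsto_of_countably_generated hi
  simpa using this.const_sub (∫ t, f t)

lemma kr_cdf_range (hf : Continuous f) (hi : Integrable f) (hp : ∀ t, 0 < f t) :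
    Set.range (fun s => ∫ t in Set.Iic s, f t) = Set.Ioo 0 (∫ t, f t) := by
  have hm := kr_cdf_strictMono hf hi hp
  have hc : Continuous (fun s => ∫ t in Set.Iic s, f t) :=
    continuous_iff_continuousAt.2 fun s => (kr_cdf_hasDerivAt hf hi s).continuousAt
  apply Set.Subset.antisymm
  · rintro _ ⟨s, rfl⟩
    constructor
    · exact (hm.monotone.le_of_tendsto (kr_cdf_bot hi) (s-1)).trans_lt (hm (by linarith))
    · exact (hm (show s < s+1 by linarith)).trans_le (hm.monotone.ge_of_tendsto (kr_cdf_top hi) (s+1))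
  · intro a ha
    obtain ⟨s₁, h₁⟩ := ((kr_cdf_bot hi).eventually_lt_const ha.1).exists
    obtain ⟨s₂, h₂⟩ := ((kr_cdf_top hi).eventually_const_lt ha.2).exists
    exact mem_range_of_exists_le_of_exists_ge hc ⟨s₁, h₁.le⟩ ⟨s₂, h₂.le⟩

lemma kr_shift (s : ℝ) : ∫ t in Set.Iic (0:ℝ), f (s + t) = ∫ t in Set.Iic s, f t := by
  have := (measurePreserving_add_left volume s).setIntegral_preimage_emb
    (measurableEmbedding_addLeft s) f (Set.Iic s)
  simpa using this
end oned

section step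
variable (n : ℕ)

/-- forget the last coordinate -/
def krI : (Fin (n+1) → ℝ) →L[ℝ] (Fin n → ℝ) :=
  ContinuousLinearMap.pi fun i => ContinuousLinearMap.proj (Fin.castSucc i)

/-- append a zero last coordinate -/
def krJ : (Fin n → ℝ) →L[ℝ] (Fin (n+1) → ℝ) :=
  ContinuousLinearMap.pi fun i => Fin.lastCases (motive := fun _ => (Fin n → ℝ) →L[ℝ] ℝ) 0
    (fun j => ContinuousLinearMap.proj j) i

/-- last basis vector -/
def krE : Fin (n+1) → ℝ := Pi.single (Fin.last n) 1

variable {n}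

@[simp] lemma krI_apply (y : Fin (n+1) → ℝ) (i : Fin n) : krI n y i = y i.castSucc := rfl
@[simp] lemma krJ_castSucc (x : Fin n → ℝ) (i : Fin n) : krJ n x i.castSucc = x i := by
  simp [krJ]
@[simp] lemma krJ_last (x : Fin n → ℝ) : krJ n x (Fin.last n) = 0 := by
  simp [krJ]
@[simp] lemma krE_castSucc (i : Fin n) : krE n i.castSucc = 0 := by
  simp [krE, (Fin.castSucc_lt_last i).ne]
@[simp] lemma krE_last : krE n (Fin.last n) = 1 := by simp [krE]
@[simp] lemma krI_krJ (x : Fin n → ℝ) : krI n (krJ n x) = x := by ext i; simp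
@[simp] lemma krI_krE : krI n (krE n) = 0 := by ext i; simp
lemma krI_single (j : Fin n) : krI n (Pi.single j.castSucc 1) = Pi.single j 1 := by
  ext i; simp [Pi.single_apply]
lemma kr_decomp (y : Fin (n+1) → ℝ) : y = krJ n (krI n y) + y (Fin.last n) • krE n := by
  ext i
  refine Fin.lastCases ?_ (fun j => ?_) i <;> simp
lemma kr_norm_krE : ‖krE n‖ = 1 := by
  apply le_antisymm
  · rw [pi_norm_le_iff_of_nonneg zero_le_one]
    intro i
    refine Fin.lastCases ?_ (fun j => ?_) i <;> simp
  · simpa using norm_le_pi_norm (krE n) (Fin.last n)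
lemma kr_norm_krJ_le (x : Fin n → ℝ) : ‖krJ n x‖ ≤ 1 * ‖x‖ := by
  rw [one_mul, pi_norm_le_iff_of_nonneg (norm_nonneg _)]
  intro i
  refine Fin.lastCases ?_ (fun j => ?_) i
  · simp
  · simpa using norm_le_pi_norm x j
lemma kr_norm_ge (x : Fin n → ℝ) (t : ℝ) : (‖x‖ + |t|) / 2 ≤ ‖krJ n x + t • krE n‖ := by
  have h1 : ‖x‖ ≤ ‖krJ n x + t • krE n‖ := by
    rw [pi_norm_le_iff_of_nonneg (norm_nonneg _)]
    intro i
    simpa using norm_le_pi_norm (krJ n x + t • krE n) i.castSucc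
  have h2 : |t| ≤ ‖krJ n x + t • krE n‖ := by
    simpa using norm_le_pi_norm (krJ n x + t • krE n) (Fin.last n)
  linarith

lemma kr_fubini (p : (Fin (n+1) → ℝ) → ℝ) (hi : Integrable p) :
    ∫ x, ∫ t : ℝ, p (krJ n x + t • krE n) = ∫ y, p y := by
  have hm := (volume_preserving_piFinSuccAbove (fun _ : Fin (n+1) => ℝ) (Fin.last n)).symm
  have hp : ∀ z : ℝ × (Fin n → ℝ), 
      (MeasurableEquiv.piFinSuccAbove (fun _ : Fin (n+1) => ℝ) (Fin.last n)).symm z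
        = krJ n z.2 + z.1 • krE n := by
    rintro ⟨t, x⟩
    ext i
    refine Fin.lastCases ?_ (fun j => ?_) i
    · simp [MeasurableEquiv.piFinSuccAbove]
    · simp [MeasurableEquiv.piFinSuccAbove]
  have hi' := hm.integrable_comp_of_integrable hi
  rw [← hm.integral_comp' p]
  rw [Measure.volume_eq_prod] at hi' ⊢
  refine Eq.trans ?_ (integral_prod_symm _ hi').symm
  simp only [Function.comp, hp]

end step

lemma kr_main : ∀ (d : ℕ) (p : (Fin d → ℝ) → ℝ) (hpos : ∀ x, 0 < p x) (hC1 : ContDiff ℝ 1 p)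
    (c ε : ℝ) (hc : 0 < c) (hε : 0 < ε) (hb : ∀ x, ‖p x‖ ≤ c * Real.exp (-ε * ‖x‖))
    (hb' : ∀ x, ‖fderiv ℝ p x‖ ≤ c * Real.exp (-ε * ‖x‖)) (hpint : ∫ x, p x = 1),
    ∃ G : (Fin d → ℝ) → (Fin d → ℝ), ContDiff ℝ 1 G ∧ Function.Injective G ∧
      Set.range G = unitCube d ∧
      (∀ x i j, i < j → fderiv ℝ G x (Pi.single j 1) i = 0) ∧
      (∀ x, ∏ i, fderiv ℝ G x (Pi.single i 1) i = p x) := by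
  intro d
  induction d with
  | zero =>
    intro p hpos hC1 c ε hc hε hb hb' hpint
    refine ⟨id, contDiff_id, Function.injective_id, ?_, ?_, ?_⟩
    · ext z; simp [unitCube]
    · intro x i; exact i.elim0
    · intro x
      rw [integral_unique] at hpint
      have hv : (volume : Measure (Fin 0 → ℝ)).real Set.univ = 1 := by
        simp [measureReal_def, volume_pi]
      rw [hv, one_smul] at hpint
      have hx : p x = 1 := by
        rw [← hpint]; exact congrArg p (Subsingleton.elim _ _)
      rw [hx]
      simp
  | succ n ih =>
    intro p hpos hC1 c ε hc hε hb hb' hpint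
    have he := kr_norm_krE (n := n)
    have hcont := hC1.continuous
    have hli : ∀ y, Integrable (fun t : ℝ => p (y + t • krE n)) :=
      kr_line_integrable hc hε he hcont hb
    have hlc : ∀ y, Continuous (fun t : ℝ => p (y + t • krE n)) := fun y => by fun_prop
    have hli' : ∀ y, Integrable (fun t : ℝ => fderiv ℝ p (y + t • krE n)) :=
      kr_line_integrable hc hε he (hC1.continuous_fderiv one_ne_zero) hb'
    set q : (Fin n → ℝ) → ℝ := fun x => ∫ t : ℝ in Set.univ, p (krJ n x + t • krE n) with hq
    have hq' : ∀ x, q x = ∫ t : ℝ, p (krJ n x + t • krE n) := fun x => by simp [hq]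
    have hqd : ∀ x, HasFDerivAt q ((∫ t : ℝ in Set.univ, fderiv ℝ p (krJ n x + t • krE n)).comp (krJ n)) x :=
      fun x => (kr_line_hasFDerivAt hc hε he hC1 hb hb' Set.univ (krJ n x)).comp x
        (krJ n).hasFDerivAt
    have hqC : ContDiff ℝ 1 q :=
      (kr_line_contDiff hc hε he hC1 hb hb' Set.univ).comp (krJ n).contDiff
    have hqpos : ∀ x, 0 < q x := fun x => by
      rw [hq']
      have h0 : (0:ℝ) < ∫ t in Set.Iic (0:ℝ), p (krJ n x + t • krE n) :=
        ((kr_cdf_range (hlc (krJ n x)) (hli _) (fun t => hpos _)).subset ⟨0, rfl⟩).1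
      have h1 := ((kr_cdf_range (hlc (krJ n x)) (hli _) (fun t => hpos _)).subset ⟨0, rfl⟩).2
      exact h0.trans h1
    set K : ℝ := ∫ t : ℝ, Real.exp (-(ε/2) * |t|) with hK
    have hε2 : 0 < ε / 2 := by positivity
    have hKi := kr_integrable_exp hε2
    have hKpos : 0 < K := integral_exp_pos hKi
    have hpt : ∀ (x : Fin n → ℝ) (t : ℝ), c * Real.exp (-ε * ‖krJ n x + t • krE n‖) ≤
        (c * Real.exp (-(ε/2) * ‖x‖)) * Real.exp (-(ε/2) * |t|) := fun x t => by
      rw [mul_assoc, ← Real.exp_add]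
      gcongr
      have := kr_norm_ge x t
      nlinarith
    have hcK : ∀ x : Fin n → ℝ, ∫ t : ℝ, (c * Real.exp (-(ε/2) * ‖x‖)) * Real.exp (-(ε/2) * |t|)
        = (c * K) * Real.exp (-(ε/2) * ‖x‖) := fun x => by
      rw [integral_const_mul]; ring
    have hqb : ∀ x, ‖q x‖ ≤ (c * K) * Real.exp (-(ε/2) * ‖x‖) := fun x => by
      rw [hq', ← hcK]
      exact norm_integral_le_of_norm_le (hKi.const_mul _)
        (Filter.Eventually.of_forall fun t => (hb _).trans (hpt x t))
    have hqb' : ∀ x, ‖fderiv ℝ q x‖ ≤ (c * K) * Real.exp (-(ε/2) * ‖x‖) := fun x => by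
      rw [(hqd x).fderiv]
      refine (ContinuousLinearMap.opNorm_comp_le _ _).trans ?_
      have h1 : ‖krJ n‖ ≤ 1 := (krJ n).opNorm_le_bound zero_le_one kr_norm_krJ_le
      refine (mul_le_of_le_one_right (norm_nonneg _) h1).trans ?_
      rw [← hcK, setIntegral_univ]
      exact norm_integral_le_of_norm_le (hKi.const_mul _)
        (Filter.Eventually.of_forall fun t => (hb' _).trans (hpt x t))
    have hqint : ∫ x, q x = 1 := by
      simp only [hq']
      rw [kr_fubini p (integrable_of_integral_eq_one hpint), hpint]
    obtain ⟨G', hG'C, hG'inj, hG'r, hG't, hG'p⟩ :=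
      ih q hqpos hqC (c * K) (ε/2) (by positivity) hε2 hqb hqb' hqint
    set H : (Fin (n+1) → ℝ) → ℝ := fun y => ∫ t in Set.Iic (0:ℝ), p (y + t • krE n) with hH
    have hHC : ContDiff ℝ 1 H := kr_line_contDiff hc hε he hC1 hb hb' _
    have hHs : ∀ y (s : ℝ), H (y + s • krE n) = ∫ t in Set.Iic s, p (y + t • krE n) := fun y s => by
      rw [← kr_shift (f := fun t => p (y + t • krE n)) s]
      simp only [hH, add_smul, add_assoc]
    have hqy : ∀ y, q (krI n y) = ∫ t : ℝ, p (y + t • krE n) := fun y => by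
      rw [hq', ← integral_add_left_eq_self _ (y (Fin.last n))]
      congr 1; ext t
      conv_rhs => rw [kr_decomp y]
      rw [add_smul, add_assoc]
    have hr : ∀ y, Set.range (fun s : ℝ => H (y + s • krE n)) = Set.Ioo 0 (q (krI n y)) := fun y => by
      simp only [hHs]
      rw [kr_cdf_range (hlc y) (hli y) (fun t => hpos _), hqy]
    have hmono : ∀ y, StrictMono (fun s : ℝ => H (y + s • krE n)) := fun y => by
      simp only [hHs]
      exact kr_cdf_strictMono (hlc y) (hli y) (fun t => hpos _)
    have hder : ∀ y, HasDerivAt (fun s : ℝ => H (y + s • krE n)) (p y) 0 := fun y => by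
      simp only [hHs]
      simpa using kr_cdf_hasDerivAt (hlc y) (hli y) 0
    set G : (Fin (n+1) → ℝ) → (Fin (n+1) → ℝ) := fun y =>
      Fin.snoc (α := fun _ => ℝ) (G' (krI n y)) (H y / q (krI n y)) with hG
    have hGc : ∀ y (j : Fin n), G y j.castSucc = G' (krI n y) j := fun y j => by simp [hG]
    have hGl : ∀ y, G y (Fin.last n) = H y / q (krI n y) := fun y => by simp [hG]
    have hGC : ContDiff ℝ 1 G := by
      rw [contDiff_pi]
      intro i
      refine Fin.lastCases ?_ (fun j => ?_) i
      · simp only [hGl]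
        exact hHC.div (hqC.comp (krI n).contDiff) (fun y => (hqpos _).ne')
      · simp only [hGc]
        exact (contDiff_pi.1 hG'C j).comp (krI n).contDiff
    have hGd : ∀ y, HasFDerivAt G (fderiv ℝ G y) y := fun y =>
      (hGC.differentiable one_ne_zero y).hasFDerivAt
    have hDc : ∀ y v (j : Fin n), fderiv ℝ G y v j.castSucc = fderiv ℝ G' (krI n y) (krI n v) j := by
      intro y v j
      have h1 := hasFDerivAt_pi'.1 (hGd y) j.castSucc
      simp only [hGc] at h1
      have h2 := (hasFDerivAt_pi'.1 (hG'C.differentiable one_ne_zero (krI n y)).hasFDerivAt j).comp y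
        (krI n).hasFDerivAt
      have h3 := h1.unique h2
      simpa using congrArg (fun L => L v) h3
    have hDl : ∀ y, fderiv ℝ G y (krE n) (Fin.last n) = p y / q (krI n y) := by
      intro y
      have h1 := hasFDerivAt_pi'.1 (hGd y) (Fin.last n)
      have hl : HasDerivAt (fun s : ℝ => y + s • krE n) (krE n) 0 := by
        simpa using ((hasDerivAt_id (0:ℝ)).smul_const (krE n)).const_add y
      have h1' : HasFDerivAt (fun y => G y (Fin.last n))
        ((ContinuousLinearMap.proj (Fin.last n)).comp (fderiv ℝ G y)) (y + (0:ℝ) • krE n) := by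
        simpa using h1
      have h2 := h1'.comp_hasDerivAt (0:ℝ) hl
      have h3 : HasDerivAt (fun s : ℝ => H (y + s • krE n) / q (krI n y)) (p y / q (krI n y)) 0 :=
        (hder y).div_const _
      have h4 : ((fun y => G y (Fin.last n)) ∘ fun s : ℝ => y + s • krE n)
          = fun s : ℝ => H (y + s • krE n) / q (krI n y) := by
        ext s; simp [hGl]
      rw [h4] at h2
      simpa using h2.unique h3
    refine ⟨G, hGC, ?_, ?_, ?_, ?_⟩
    · intro y y' hyy
      have hI : krI n y = krI n y' := by
        apply hG'inj
        ext j
        rw [← hGc, ← hGc, hyy]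
      have hl : H y = H y' := by
        have := congrFun hyy (Fin.last n)
        rw [hGl, hGl, ← hI] at this
        exact (div_left_inj' (hqpos _).ne').1 this
      rw [kr_decomp y, kr_decomp y', ← hI] at hl ⊢
      rw [(hmono (krJ n (krI n y))).injective hl]
    · apply Set.Subset.antisymm
      · rintro _ ⟨y, rfl⟩
        intro i _
        refine Fin.lastCases ?_ (fun j => ?_) i
        · rw [hGl]
          have := (hr y).subset ⟨0, rfl⟩
          simp only [zero_smul, add_zero] at this
          exact ⟨div_pos this.1 (hqpos _), (div_lt_one (hqpos _)).2 this.2⟩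
        · rw [hGc]
          exact hG'r.subset ⟨_, rfl⟩ j (Set.mem_univ _)
      · intro z hz
        obtain ⟨x, hx⟩ := hG'r.superset (show krI n z ∈ unitCube n from
          fun j _ => hz j.castSucc (Set.mem_univ _))
        have hzl := hz (Fin.last n) (Set.mem_univ _)
        obtain ⟨s, hs⟩ := (hr (krJ n x)).superset
          (show z (Fin.last n) * q (krI n (krJ n x)) ∈ _ from
            ⟨mul_pos hzl.1 (hqpos _), mul_lt_of_lt_one_left (hqpos _) hzl.2⟩)
        refine ⟨krJ n x + s • krE n, ?_⟩
        ext i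
        refine Fin.lastCases ?_ (fun j => ?_) i
        · rw [hGl]
          simp only at hs
          rw [hs]
          simp [(hqpos x).ne']
        · rw [hGc]
          simp [hx]
    · intro y i j hij
      induction i using Fin.lastCases with
      | last => exact absurd hij (not_lt.2 (Fin.le_last j))
      | cast i =>
        rw [hDc]
        induction j using Fin.lastCases with
        | last =>
          have : krI n (Pi.single (Fin.last n) 1) = 0 := krI_krE
          rw [this]; simp
        | cast j =>
          rw [krI_single]
          exact hG't _ _ _ (by simpa using hij)
    · intro y
      rw [Fin.prod_univ_castSucc]
      simp only [hDc, krI_single]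
      have := hDl y
      rw [krE] at this
      rw [hG'p, this]
      field_simp [(hqpos (krI n y)).ne']

/-- **Knothe–Rosenblatt map.** Let `μ` be a Borel probability measure on `ℝ^d`
with a strictly positive continuously differentiable density `p` such that `p` and its
first-order derivatives decay exponentially at infinity. Then there is a continuously
differentiable bijection `U` from `(0,1)^d` onto `ℝ^d` such that: (i) `U` pushes the uniform
probability measure on `(0,1)^d` forward to `μ`; (ii) the Jacobian of `U` is triangular:
`∂U_i/∂z_j = 0` for `j > i`; (iii) the diagonal entries `∂U_i/∂z_i` never vanish on
`(0,1)^d`. -/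
theorem knothe_rosenblatt_map
    {d : ℕ} (μ : Measure (Fin d → ℝ)) [IsProbabilityMeasure μ]
    (p : (Fin d → ℝ) → ℝ)
    (hdensity : μ = volume.withDensity fun x => ENNReal.ofReal (p x))
    (hpos : ∀ x, 0 < p x)
    (hC1 : ContDiff ℝ 1 p)
    (hdecay : ∃ c ε : ℝ, 0 < c ∧ 0 < ε ∧ ∀ x : Fin d → ℝ,
      p x ≤ c * Real.exp (-ε * ‖x‖) ∧ ‖fderiv ℝ p x‖ ≤ c * Real.exp (-ε * ‖x‖)) :
    ∃ (U : (Fin d → ℝ) → (Fin d → ℝ))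
      (DU : (Fin d → ℝ) → ((Fin d → ℝ) →L[ℝ] (Fin d → ℝ))),
      Measurable U ∧
      -- `U` is one-to-one from `(0,1)^d` onto `ℝ^d`
      Set.InjOn U (unitCube d) ∧ U '' unitCube d = Set.univ ∧
      -- `U` is continuously differentiable on `(0,1)^d`, with derivative `DU`
      ContDiffOn ℝ 1 U (unitCube d) ∧
      (∀ z ∈ unitCube d, HasFDerivAt U (DU z) z) ∧
      ContinuousOn DU (unitCube d) ∧
      -- (i) `U` pushes the uniform distribution on the cube forward to `μ`
      Measure.map U (volume.restrict (unitCube d)) = μ ∧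
      -- (ii) the Jacobian matrix is triangular: `∂U_i/∂z_j = 0` whenever `j > i`
      (∀ z ∈ unitCube d, ∀ i j : Fin d, i < j → DU z (Pi.single j 1) i = 0) ∧
      -- (iii) the diagonal entries never vanish
      (∀ z ∈ unitCube d, ∀ i : Fin d, DU z (Pi.single i 1) i ≠ 0) := by
  obtain ⟨c, ε, hc, hε, hb⟩ := hdecay
  have hpint : ∫ x, p x = 1 := by
    have h1 : ∫⁻ x, ENNReal.ofReal (p x) = 1 := by
      have := measure_univ (μ := μ)
      rwa [hdensity, withDensity_apply _ MeasurableSet.univ, Measure.restrict_univ] at this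
    rw [integral_eq_lintegral_of_nonneg_ae (Filter.Eventually.of_forall fun x => (hpos x).le)
      hC1.continuous.aestronglyMeasurable, h1]
    simp
  obtain ⟨G, hGC, hGinj, hGr, hGt, hGp⟩ := kr_main d p hpos hC1 c ε hc hε
    (fun x => by rw [Real.norm_of_nonneg (hpos x).le]; exact (hb x).1) (fun x => (hb x).2) hpint
  have hGd : ∀ x, HasFDerivAt G (fderiv ℝ G x) x := fun x =>
    (hGC.differentiable one_ne_zero x).hasFDerivAt
  have hdet : ∀ x, (fderiv ℝ G x).det = p x := fun x => by
    rw [ContinuousLinearMap.det, ← LinearMap.det_toMatrix', Matrix.det_of_isLowerTriangular, ← hGp]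
    · simp [LinearMap.toMatrix'_apply]
    · intro i j hij
      have hij' : i < j := by simpa using hij
      simpa [LinearMap.toMatrix'_apply] using hGt x i j hij'
  have hdet0 : ∀ x, (fderiv ℝ G x).det ≠ 0 := fun x => by rw [hdet]; exact (hpos x).ne'
  have hdiag : ∀ x i, fderiv ℝ G x (Pi.single i 1) i ≠ 0 := fun x i h => by
    refine (hpos x).ne' ?_
    rw [← hGp]
    exact Finset.prod_eq_zero (Finset.mem_univ i) h
  let L : ∀ x, (Fin d → ℝ) ≃L[ℝ] (Fin d → ℝ) := fun x =>
    (fderiv ℝ G x).toContinuousLinearEquivOfDetNeZero (hdet0 x)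
  have hL : ∀ x, ((L x : (Fin d → ℝ) ≃L[ℝ] (Fin d → ℝ)) : (Fin d → ℝ) →L[ℝ] (Fin d → ℝ))
      = fderiv ℝ G x := fun x =>
    ContinuousLinearMap.coe_toContinuousLinearEquivOfDetNeZero _ _
  have hopen : IsOpenMap G := isOpenMap_of_hasStrictFDerivAt_equiv (f' := L) fun x => by
    rw [hL]; exact hGC.contDiffAt.hasStrictFDerivAt one_ne_zero
  have hemb : Topology.IsOpenEmbedding G :=
    Topology.IsOpenEmbedding.of_continuous_injective_isOpenMap hGC.continuous hGinj hopen
  let Φ := hemb.toOpenPartialHomeomorph G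
  have hΦt : Φ.target = unitCube d := by simp [Φ, hGr]
  have hcube : IsOpen (unitCube d) := by rw [← hΦt]; exact Φ.open_target
  classical
  let U : (Fin d → ℝ) → (Fin d → ℝ) := (unitCube d).piecewise Φ.symm (fun _ => 0)
  have hUG : ∀ x, U (G x) = x := fun x => by
    have hx : G x ∈ unitCube d := hGr.subset ⟨x, rfl⟩
    simp only [U, Set.piecewise_eq_of_mem _ _ _ hx]
    exact Φ.left_inv (x := x) (by simp [Φ])
  have hΦC : ∀ z ∈ unitCube d, ContDiffAt ℝ 1 Φ.symm z := fun z hz =>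
    Φ.contDiffAt_symm (f₀' := L (Φ.symm z)) (by rw [hΦt]; exact hz)
      (by rw [hL]; exact hGd _) hGC.contDiffAt
  have hUC : ContDiffOn ℝ 1 U (unitCube d) := by
    have : ContDiffOn ℝ 1 Φ.symm (unitCube d) := fun z hz => (hΦC z hz).contDiffWithinAt
    exact this.congr fun z hz => Set.piecewise_eq_of_mem _ _ _ hz
  have hUd : ∀ z ∈ unitCube d, HasFDerivAt U (fderiv ℝ U z) z := fun z hz =>
    ((hUC.contDiffAt (hcube.mem_nhds hz)).differentiableAt one_ne_zero).hasFDerivAt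
  have hUm : Measurable U := by
    refine ContinuousOn.measurable_piecewise ?_ continuousOn_const hcube.measurableSet
    exact fun z hz => (hΦC z hz).continuousAt.continuousWithinAt
  have hcomp : ∀ x v, fderiv ℝ G x (fderiv ℝ U (G x) v) = v := by
    intro x
    have h1 : HasFDerivAt (U ∘ G) ((fderiv ℝ U (G x)).comp (fderiv ℝ G x)) x :=
      (hUd _ (hGr.subset ⟨x, rfl⟩)).comp x (hGd x)
    have h2 : U ∘ G = id := funext hUG
    rw [h2] at h1
    have h3 := h1.unique (hasFDerivAt_id x)
    have h4 : ∀ w, fderiv ℝ U (G x) (fderiv ℝ G x w) = w := fun w => by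
      simpa using congrArg (fun T => T w) h3
    intro v
    obtain ⟨w, rfl⟩ : ∃ w, fderiv ℝ G x w = v := by
      refine ⟨(L x).symm v, ?_⟩
      rw [← hL]; simp
    rw [h4]
  have hexp : ∀ x (v : Fin d → ℝ) i,
      fderiv ℝ G x v i = ∑ k, v k * fderiv ℝ G x (Pi.single k 1) i := by
    intro x v i
    conv_lhs => rw [pi_eq_sum_univ' v, map_sum]
    simp [Finset.sum_apply]
  have htri : ∀ x (j i : Fin d), i < j → fderiv ℝ U (G x) (Pi.single j 1) i = 0 := by
    intro x j i
    induction i using WellFoundedLT.induction with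
    | _ i ihi =>
      intro hij
      have h1 := congrFun (hcomp x (Pi.single j 1)) i
      rw [hexp, Finset.sum_eq_single i, Pi.single_eq_of_ne hij.ne] at h1
      · exact (mul_eq_zero.1 h1).resolve_right (hdiag x i)
      · intro k _ hk
        rcases lt_or_gt_of_ne hk with h | h
        · rw [ihi k h (h.trans hij), zero_mul]
        · rw [hGt x i k h, mul_zero]
      · simp
  refine ⟨U, fderiv ℝ U, hUm, ?_, ?_, hUC, hUd,
    hUC.continuousOn_fderiv_of_isOpen hcube le_rfl, ?_, ?_, ?_⟩
  · rw [← hGr]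
    rintro _ ⟨x, rfl⟩ _ ⟨y, rfl⟩ h
    rw [hUG, hUG] at h
    rw [h]
  · refine Set.eq_univ_of_forall fun x => ⟨G x, hGr.subset ⟨x, rfl⟩, hUG x⟩
  · ext B hB
    rw [Measure.map_apply hUm hB, Measure.restrict_apply (hUm hB), hdensity,
      withDensity_apply _ hB]
    have himg : U ⁻¹' B ∩ unitCube d = G '' B := by
      rw [← hGr]
      ext z
      constructor
      · rintro ⟨hz, x, rfl⟩
        exact ⟨x, by simpa [hUG] using hz, rfl⟩
      · rintro ⟨x, hx, rfl⟩
        exact ⟨by simpa [hUG] using hx, x, rfl⟩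
    rw [himg, ← lintegral_abs_det_fderiv_eq_addHaar_image volume hB
      (fun x _ => (hGd x).hasFDerivWithinAt) hGinj.injOn]
    simp only [hdet, abs_of_pos (hpos _)]
  · intro z hz i j hij
    obtain ⟨x, rfl⟩ := hGr.superset hz
    exact htri x j i hij
  · intro z hz i h0
    obtain ⟨x, rfl⟩ := hGr.superset hz
    have h1 := congrFun (hcomp x (Pi.single i 1)) i
    rw [hexp, Finset.sum_eq_zero] at h1
    · simp at h1
    · intro k _
      rcases lt_trichotomy k i with h | h | h
      · rw [htri x i k h, zero_mul]
      · rw [h, h0, zero_mul]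
      · rw [hGt x i k h, mul_zero]
end
end

section
/- Let T > 0 and let (X_t)_{0 ≤ t ≤ T} and (Y_t)_{0 ≤ t ≤ T} be ℝ^d-valued stochastic processes on a probability space (Ω,F,P), both with continuous sample paths, satisfying sup_{0 ≤ t ≤ T} E[|X_t|] < ∞ and sup_{0 ≤ t ≤ T} E[|Y_t|] < ∞. Suppose there is a constant C such that, for each t ∈ [0,T], there exists a C-Lipschitz map w(t,·) : ℝ^d → ℝ^d with P(Y_t = w(t,X_t)) = 1. Then there exists a jointly Borel-measurable map v : [0,T] × ℝ^d → ℝ^d such that v(t,·) is C-Lipschitz for every t ∈ [0,T], sup_{0 ≤ t ≤ T} |v(t,0)| < ∞, and P(for all t ∈ [0,T], Y_t = v(t,X_t)) = 1. -/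
open MeasureTheory ProbabilityTheory
open scoped ENNReal NNReal

noncomputable section

/-- `ℝ^d`. -/
abbrev Rd (d : ℕ) := EuclideanSpace ℝ (Fin d)

open Filter Topology in
/-- Measurable selection of a cluster point of a sequence of countably-valued maps into a compact
metrizable space, through a continuous surjection from the Cantor set and a real `limsup`. -/
theorem exists_measurable_cluster {α E : Type*} [MeasurableSpace α]
    [TopologicalSpace E] [CompactSpace E] [TopologicalSpace.MetrizableSpace E] [Nonempty E]
    [MeasurableSpace E] [BorelSpace E]
    (s : ℕ → α → ℤ) (hs : ∀ n, Measurable (s n)) (W : ℕ → ℤ → E) :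
    ∃ g : α → E, Measurable g ∧ ∀ a, ∃ U : Ultrafilter ℕ, (U : Filter ℕ) ≤ atTop ∧
      Tendsto (fun n => W n (s n a)) U (𝓝 (g a)) := by
  letI := TopologicalSpace.metrizableSpaceMetric E
  obtain ⟨f, hf, hfs⟩ := exists_nat_bool_continuous_surjective_of_compact E
  let k : cantorSet → E := f ∘ cantorSetHomeomorphNatToBool
  have hk : Continuous k := hf.comp cantorSetHomeomorphNatToBool.continuous
  have hks : Function.Surjective k := hfs.comp cantorSetHomeomorphNatToBool.surjective
  choose c hc using fun n i => hks (W n i)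
  let L : α → ℝ := fun a => limsup (fun n => (c n (s n a) : ℝ)) atTop
  have hL : Measurable L := by
    refine Measurable.limsup fun n => ?_
    exact (measurable_from_top (f := fun i : ℤ => (c n i : ℝ))).comp (hs n)
  have hb : ∀ n i, (c n i : ℝ) ∈ Set.Icc (0 : ℝ) 1 := fun n i =>
    cantorSet_subset_unitInterval (c n i).2
  have hcl : ∀ a, ∃ U : Ultrafilter ℕ, (U : Filter ℕ) ≤ atTop ∧
      Tendsto (fun n => (c n (s n a) : ℝ)) U (𝓝 (L a)) := by
    intro a
    have : MapClusterPt (L a) atTop (fun n => (c n (s n a) : ℝ)) := by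
      apply MapClusterPt.limsup
      · exact (isBoundedUnder_of ⟨0, fun n => (hb n _).1⟩ :
          IsBoundedUnder (· ≥ ·) atTop _).isCoboundedUnder_le
      · exact isBoundedUnder_of ⟨1, fun n => (hb n _).2⟩
    exact mapClusterPt_iff_ultrafilter.1 this
  have hmem : ∀ a, L a ∈ cantorSet := by
    intro a
    obtain ⟨U, -, hU⟩ := hcl a
    exact isClosed_cantorSet.mem_of_tendsto hU (Eventually.of_forall fun n => (c n _).2)
  refine ⟨fun a => k ⟨L a, hmem a⟩, hk.measurable.comp (hL.subtype_mk), fun a => ?_⟩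
  obtain ⟨U, h1, h2⟩ := hcl a
  refine ⟨U, h1, ?_⟩
  have h3 : Tendsto (fun n => c n (s n a)) U (𝓝 ⟨L a, hmem a⟩) := tendsto_subtype_rng.2 h2
  have h4 := (hk.tendsto _).comp h3
  refine h4.congr fun n => ?_
  exact hc n _

/-- The set of `C`-Lipschitz maps bounded by `M` at the origin. -/
def lipSet (d : ℕ) (C : ℝ≥0) (M : ℝ) : Set (Rd d → Rd d) :=
  {f | LipschitzWith C f ∧ ‖f 0‖ ≤ M}

theorem isCompact_lipSet (d : ℕ) (C : ℝ≥0) (M : ℝ) : IsCompact (lipSet d C M) := by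
  have hK : IsCompact (Set.pi Set.univ fun x : Rd d => Metric.closedBall (0 : Rd d) (M + C * ‖x‖)) :=
    isCompact_univ_pi fun x => isCompact_closedBall _ _
  refine hK.of_isClosed_subset ?_ ?_
  · have : lipSet d C M =
        (⋂ x, ⋂ y, {f : Rd d → Rd d | dist (f x) (f y) ≤ C * dist x y}) ∩ {f | ‖f 0‖ ≤ M} := by
      ext f
      simp [lipSet, lipschitzWith_iff_dist_le_mul]
    rw [this]
    refine IsClosed.inter (isClosed_iInter fun x => isClosed_iInter fun y => ?_) ?_
    · exact isClosed_le (by fun_prop) (by fun_prop)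
    · exact isClosed_le (by fun_prop) (by fun_prop)
  · rintro f ⟨h1, h2⟩ x -
    have := h1.dist_le_mul x 0
    rw [dist_eq_norm, dist_zero_right] at this
    rw [mem_closedBall_zero_iff]
    calc ‖f x‖ = ‖f 0 + (f x - f 0)‖ := by congr 1; abel
      _ ≤ ‖f 0‖ + ‖f x - f 0‖ := norm_add_le _ _
      _ ≤ _ := add_le_add h2 this

theorem metrizable_lipSet (d : ℕ) (C : ℝ≥0) (M : ℝ) :
    TopologicalSpace.MetrizableSpace (lipSet d C M) := by
  haveI := isCompact_iff_compactSpace.1 (isCompact_lipSet d C M)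
  let r : lipSet d C M → (ℕ → Rd d) := fun f n => f.1 (TopologicalSpace.denseSeq (Rd d) n)
  have hr : Continuous r := by
    refine continuous_pi fun n => ?_
    exact (continuous_apply _).comp continuous_subtype_val
  have hi : Function.Injective r := by
    intro f g h
    apply Subtype.ext
    refine Continuous.ext_on (TopologicalSpace.denseRange_denseSeq (Rd d)) f.2.1.continuous
      g.2.1.continuous ?_
    rintro _ ⟨n, rfl⟩
    exact congrFun h n
  exact (hr.isClosedEmbedding hi).isEmbedding.metrizableSpace


/-- Let `(X_t)_{0≤t≤T}` and `(Y_t)_{0≤t≤T}` be `ℝ^d`-valued processes with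
continuous sample paths and `sup_{t ≤ T} E|X_t| < ∞`, `sup_{t ≤ T} E|Y_t| < ∞`. If there is a
constant `C` such that for each `t ∈ [0,T]` there exists a `C`-Lipschitz map `w(t,·)` with
`P(Y_t = w(t,X_t)) = 1`, then there exists a jointly Borel-measurable `v : [0,T] × ℝ^d → ℝ^d`
with `v(t,·)` `C`-Lipschitz for every `t`, `sup_{t ≤ T} |v(t,0)| < ∞`, and
`P(∀ t ∈ [0,T], Y_t = v(t,X_t)) = 1`. -/
theorem joint_decoupling_field
    {d : ℕ} {Ω : Type} [MeasurableSpace Ω] (P : Measure Ω) [IsProbabilityMeasure P]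
    (T : ℝ) (hT : 0 < T)
    (X Y : ℝ → Ω → Rd d)
    (hXmeas : ∀ t, Measurable (X t)) (hYmeas : ∀ t, Measurable (Y t))
    (hXcont : ∀ ω, ContinuousOn (fun t => X t ω) (Set.Icc 0 T))
    (hYcont : ∀ ω, ContinuousOn (fun t => Y t ω) (Set.Icc 0 T))
    (hXint : ∃ M : ℝ, ∀ t ∈ Set.Icc (0 : ℝ) T, ∫⁻ ω, ‖X t ω‖₊ ∂P ≤ ENNReal.ofReal M)
    (hYint : ∃ M : ℝ, ∀ t ∈ Set.Icc (0 : ℝ) T, ∫⁻ ω, ‖Y t ω‖₊ ∂P ≤ ENNReal.ofReal M)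
    (C : ℝ≥0)
    (hw : ∀ t ∈ Set.Icc (0 : ℝ) T, ∃ w : Rd d → Rd d,
      LipschitzWith C w ∧ ∀ᵐ ω ∂P, Y t ω = w (X t ω)) :
    ∃ v : ℝ → Rd d → Rd d,
      Measurable (Function.uncurry v) ∧
      (∀ t ∈ Set.Icc (0 : ℝ) T, LipschitzWith C (v t)) ∧
      (∃ M : ℝ, ∀ t ∈ Set.Icc (0 : ℝ) T, ‖v t 0‖ ≤ M) ∧
      ∀ᵐ ω ∂P, ∀ t ∈ Set.Icc (0 : ℝ) T, Y t ω = v t (X t ω) := by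
  classical
  obtain ⟨MX, hMX⟩ := hXint
  obtain ⟨MY, hMY⟩ := hYint
  choose! w hwL hwE using hw
  -- uniform bound at the origin
  obtain ⟨M, hM0, hM⟩ : ∃ M : ℝ, 0 ≤ M ∧ ∀ t ∈ Set.Icc (0 : ℝ) T, ‖w t 0‖ ≤ M := by
    refine ⟨(ENNReal.ofReal MY + C * ENNReal.ofReal MX).toReal, ENNReal.toReal_nonneg,
      fun t ht => ?_⟩
    have h1 : (‖w t 0‖₊ : ℝ≥0∞) ≤ ENNReal.ofReal MY + C * ENNReal.ofReal MX := by
      calc (‖w t 0‖₊ : ℝ≥0∞) = ∫⁻ _, (‖w t 0‖₊ : ℝ≥0∞) ∂P := by simp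
        _ ≤ ∫⁻ ω, ((‖Y t ω‖₊ : ℝ≥0∞) + C * (‖X t ω‖₊ : ℝ≥0∞)) ∂P := by
          refine lintegral_mono_ae ?_
          filter_upwards [hwE t ht] with ω hω
          have h2 := (hwL t ht).dist_le_mul 0 (X t ω)
          rw [← hω, dist_eq_norm, dist_zero_left] at h2
          have h3 : ‖w t 0‖ ≤ ‖Y t ω‖ + C * ‖X t ω‖ := by
            have := norm_sub_norm_le (w t 0) (Y t ω)
            linarith
          exact_mod_cast h3
        _ = ∫⁻ ω, (‖Y t ω‖₊ : ℝ≥0∞) ∂P + C * ∫⁻ ω, (‖X t ω‖₊ : ℝ≥0∞) ∂P := by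
          rw [lintegral_add_left (hYmeas t).nnnorm.coe_nnreal_ennreal,
            lintegral_const_mul _ (hXmeas t).nnnorm.coe_nnreal_ennreal]
        _ ≤ _ := by gcongr; exacts [hMY t ht, hMX t ht]
    have h4 : ENNReal.ofReal MY + C * ENNReal.ofReal MX ≠ ∞ := by finiteness
    have := ENNReal.toReal_mono h4 h1
    simpa using this
  haveI := isCompact_iff_compactSpace.1 (isCompact_lipSet d C M)
  haveI := metrizable_lipSet d C M
  haveI : Nonempty (lipSet d C M) := ⟨⟨fun _ => 0, LipschitzWith.const' 0, by simpa using hM0⟩⟩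
  letI : MeasurableSpace (lipSet d C M) := borel _
  haveI : BorelSpace (lipSet d C M) := ⟨rfl⟩
  -- the discrete approximation of times
  let τ : ℕ → ℤ → ℝ := fun n i => max 0 (min T ((i : ℝ) / ((n : ℝ) + 1)))
  have hτ : ∀ n i, τ n i ∈ Set.Icc (0 : ℝ) T := fun n i =>
    ⟨le_max_left _ _, max_le hT.le (min_le_left _ _)⟩
  let s : ℕ → ℝ → ℤ := fun n t => ⌊t * ((n : ℝ) + 1)⌋
  have hs : ∀ n, Measurable (s n) := fun n => (measurable_id.mul_const _).floor
  have hlim : ∀ t ∈ Set.Icc (0 : ℝ) T,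
      Filter.Tendsto (fun n => τ n (s n t)) Filter.atTop (nhds t) := by
    intro t ht
    have h1 : Filter.Tendsto (fun n : ℕ => ((s n t : ℤ) : ℝ) / ((n : ℝ) + 1)) Filter.atTop
        (nhds t) := by
      have h0 : Filter.Tendsto (fun n : ℕ => t - 1 / ((n : ℝ) + 1)) Filter.atTop (nhds t) := by
        simpa using tendsto_const_nhds.sub (tendsto_one_div_add_atTop_nhds_zero_nat (𝕜 := ℝ))
      refine tendsto_of_tendsto_of_tendsto_of_le_of_le h0 tendsto_const_nhds ?_ ?_
      · intro n
        have hn : (0 : ℝ) < (n : ℝ) + 1 := by positivity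
        have := Int.lt_floor_add_one (t * ((n : ℝ) + 1))
        change t - 1 / ((n : ℝ) + 1) ≤ (⌊t * ((n : ℝ) + 1)⌋ : ℝ) / ((n : ℝ) + 1)
        rw [le_div_iff₀ hn, sub_mul, one_div, inv_mul_cancel₀ hn.ne']
        linarith
      · intro n
        have hn : (0 : ℝ) < (n : ℝ) + 1 := by positivity
        change (⌊t * ((n : ℝ) + 1)⌋ : ℝ) / ((n : ℝ) + 1) ≤ t
        rw [div_le_iff₀ hn]
        exact Int.floor_le _
    have h2 : Filter.Tendsto (fun x : ℝ => max 0 (min T x)) (nhds t)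
        (nhds (max 0 (min T t))) :=
      Continuous.tendsto (by fun_prop) t
    rw [min_eq_right ht.2, max_eq_right ht.1] at h2
    exact h2.comp h1
  obtain ⟨g, hg, hgU⟩ := exists_measurable_cluster s hs
    (fun n i => (⟨w (τ n i), hwL _ (hτ n i), hM _ (hτ n i)⟩ : lipSet d C M))
  refine ⟨fun t => (g t).1, ?_, fun t _ => (g t).2.1, ⟨M, fun t _ => (g t).2.2⟩, ?_⟩
  · have h1 : Measurable (Function.uncurry fun (x : Rd d) (t : ℝ) => (g t).1 x) := by
      refine measurable_uncurry_of_continuous_of_measurable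
        (fun t => (g t).2.1.continuous) fun x => ?_
      have h2 : Continuous fun f : lipSet d C M => f.1 x :=
        (continuous_apply x).comp continuous_subtype_val
      exact h2.measurable.comp hg
    exact h1.comp measurable_swap
  · have hall : ∀ᵐ ω ∂P, ∀ n i, Y (τ n i) ω = w (τ n i) (X (τ n i) ω) :=
      ae_all_iff.2 fun n => ae_all_iff.2 fun i => hwE _ (hτ n i)
    filter_upwards [hall] with ω hω t ht
    obtain ⟨U, hU, hUg⟩ := hgU t
    have hin : Filter.Tendsto (fun n => τ n (s n t)) U (nhdsWithin t (Set.Icc 0 T)) :=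
      tendsto_nhdsWithin_iff.2 ⟨(hlim t ht).mono_left hU, Filter.Eventually.of_forall
        fun n => hτ n _⟩
    have hX' : Filter.Tendsto (fun n => X (τ n (s n t)) ω) U (nhds (X t ω)) :=
      (hXcont ω t ht).tendsto.comp hin
    have hY' : Filter.Tendsto (fun n => Y (τ n (s n t)) ω) U (nhds (Y t ω)) :=
      (hYcont ω t ht).tendsto.comp hin
    have hw1 : Filter.Tendsto (fun n => w (τ n (s n t)) (X t ω)) U (nhds ((g t).1 (X t ω))) := by
      have h2 : Continuous fun f : lipSet d C M => f.1 (X t ω) :=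
        (continuous_apply _).comp continuous_subtype_val
      exact (h2.tendsto _).comp hUg
    have hd : Filter.Tendsto (fun n => dist (Y (τ n (s n t)) ω) (w (τ n (s n t)) (X t ω))) U
        (nhds 0) := by
      have h3 : Filter.Tendsto (fun n => (C : ℝ) * dist (X (τ n (s n t)) ω) (X t ω)) U
          (nhds 0) := by
        have := (hX'.dist (tendsto_const_nhds (x := X t ω))).const_mul (C : ℝ)
        simpa using this
      refine squeeze_zero (fun n => dist_nonneg) (fun n => ?_) h3
      rw [hω n (s n t)]
      exact (hwL _ (hτ n _)).dist_le_mul _ _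
    exact dist_eq_zero.1 (tendsto_nhds_unique (hY'.dist hw1) hd)
end
end
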